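/- There exists a constant c₂ ∈ (0,1) such that for every even integer j ≥ 2, the j³/2-fold composition (π_{n(1/j)} ∘ π_{n(−1/j)})^{j³/2} applied to the vector v₀ = (1,0) satisfies ‖(π_{n(1/j)} ∘ π_{n(−1/j)})^{j³/2} v₀‖ ≤ c₂^{j}. -/

import Mathlib

open scoped RealInnerProductSpace

/-- Orthogonal projection onto the orthogonal complement of `u`:
`π_u z = z - ⟪z, u⟫ • u`. -/
noncomputable def orthProj {E : Type*} [NormedAddCommGroup E] [InnerProductSpace ℝ E]
    (u : E) : E →L[ℝ] E :=
  ContinuousLinearMap.id ℝ E - (innerSL ℝ u).smulRight u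

/-- The unit normal `n(a) = (−2a, 1)/√(1 + 4a²)` to the parabola `x₂ = x₁²`
at the point `(a, a²)`. -/
noncomputable def parabolaNormal (a : ℝ) : EuclideanSpace ℝ (Fin 2) :=
  (Real.sqrt (1 + 4 * a ^ 2))⁻¹ • (WithLp.equiv 2 (Fin 2 → ℝ)).symm ![-2 * a, 1]

/-!
In the plane, projecting along the unit normal `n(a)` is the rank-one projection onto the unit
tangent `t(a)`. When projections onto two unit vectors `s` and `t` alternate, each one after the
first shrinks by exactly the factor `|⟪s, t⟫|`, so the `k`-th power of their composition has norm
`|⟪s, t⟫| ^ (2k - 1)`. For the tangents at `±a` this cosine is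
`(1 - 4a²) / (1 + 4a²)`, at most `exp (-4a²)` in absolute value when `4a² ≤ 1`. With `a = 1/j` and
about `j³` projections the total exponent is about `-4j`, which leaves room for `exp (-j)`.
-/

open InnerProductSpace

section RankOne

variable {𝕜 E : Type*} [RCLike 𝕜] [SeminormedAddCommGroup E] [InnerProductSpace 𝕜 E]

lemma rankOne_pow_succ (x y : E) (n : ℕ) :
    rankOne 𝕜 x y ^ (n + 1) = inner 𝕜 y x ^ n • rankOne 𝕜 x y := by
  induction n with
  | zero => simp
  | succ n ih =>
    rw [pow_succ, ih, smul_mul_assoc, ContinuousLinearMap.mul_def, rankOne_comp_rankOne, smul_smul,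
      pow_succ]

lemma norm_rankOne_self_comp_rankOne_self_pow_succ (x y : E) (n : ℕ) :
    ‖(rankOne 𝕜 x x ∘L rankOne 𝕜 y y) ^ (n + 1)‖ =
      ‖inner 𝕜 x y‖ ^ (2 * n + 1) * (‖x‖ * ‖y‖) := by
  rw [rankOne_comp_rankOne, smul_pow, rankOne_pow_succ, norm_smul, norm_smul, norm_pow, norm_pow,
    norm_inner_symm y x, norm_rankOne]
  ring

end RankOne

lemma orthProj_eq_rankOne_of_orthonormal {E : Type*} [NormedAddCommGroup E]
    [InnerProductSpace ℝ E] (hE : Module.finrank ℝ E = 2) {u v : E}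
    (huv : Orthonormal ℝ ![u, v]) : orthProj u = rankOne ℝ v v := by
  have hspan : ⊤ ≤ Submodule.span ℝ (Set.range ![u, v]) :=
    (huv.linearIndependent.span_eq_top_of_card_eq_finrank (by simp [hE])).ge
  have hsum := (OrthonormalBasis.mk huv hspan).sum_rankOne_eq_id
  simp only [OrthonormalBasis.coe_mk, Fin.sum_univ_two, Matrix.cons_val_zero,
    Matrix.cons_val_one] at hsum
  rw [orthProj, ← rankOne_def, ← hsum, add_sub_cancel_left]

/-- The unit tangent `t(a) = (1, 2a)/√(1 + 4a²)` to the parabola `x₂ = x₁²` at `(a, a²)`: it spans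
the range of `orthProj (parabolaNormal a)`. -/
noncomputable def parabolaTangent (a : ℝ) : EuclideanSpace ℝ (Fin 2) :=
  (√(1 + 4 * a ^ 2))⁻¹ • !₂[1, 2 * a]

lemma inner_parabolaTangent (a b : ℝ) :
    ⟪parabolaTangent a, parabolaTangent b⟫ =
      (1 + 4 * a * b) / (√(1 + 4 * a ^ 2) * √(1 + 4 * b ^ 2)) := by
  have hinner : ⟪!₂[1, 2 * a], !₂[1, 2 * b]⟫ = 1 + 4 * a * b := by
    simp only [PiLp.inner_apply, Fin.sum_univ_two, Matrix.cons_val_zero, Matrix.cons_val_one,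
      RCLike.inner_apply, conj_trivial]
    ring
  rw [parabolaTangent, parabolaTangent, real_inner_smul_left, real_inner_smul_right, hinner]
  field_simp

lemma norm_parabolaTangent (a : ℝ) : ‖parabolaTangent a‖ = 1 := by
  rw [norm_eq_sqrt_real_inner, inner_parabolaTangent, Real.mul_self_sqrt (by positivity),
    mul_assoc, ← sq, div_self (by positivity), Real.sqrt_one]

lemma inner_parabolaTangent_neg (a : ℝ) :
    ⟪parabolaTangent a, parabolaTangent (-a)⟫ = (1 - 4 * a ^ 2) / (1 + 4 * a ^ 2) := by
  rw [inner_parabolaTangent, neg_sq, Real.mul_self_sqrt (by positivity)]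
  ring

lemma norm_parabolaNormal (a : ℝ) : ‖parabolaNormal a‖ = 1 := by
  have hnorm : ‖!₂[-2 * a, 1]‖ = √(1 + 4 * a ^ 2) := by
    simp only [EuclideanSpace.norm_eq, Fin.sum_univ_two, Matrix.cons_val_zero, Matrix.cons_val_one,
      Real.norm_eq_abs, sq_abs]
    ring_nf
  change ‖(√(1 + 4 * a ^ 2))⁻¹ • !₂[-2 * a, 1]‖ = 1
  rw [norm_smul_of_nonneg (by positivity), hnorm, inv_mul_cancel₀ (by positivity)]

lemma inner_parabolaNormal_parabolaTangent (a : ℝ) :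
    ⟪parabolaNormal a, parabolaTangent a⟫ = 0 := by
  rw [parabolaNormal, parabolaTangent, real_inner_smul_left, real_inner_smul_right]
  simp [PiLp.inner_apply, Fin.sum_univ_two]

lemma orthonormal_parabolaNormal_parabolaTangent (a : ℝ) :
    Orthonormal ℝ ![parabolaNormal a, parabolaTangent a] := by
  simp [norm_parabolaNormal, norm_parabolaTangent, inner_parabolaNormal_parabolaTangent]

lemma orthProj_parabolaNormal (a : ℝ) :
    orthProj (parabolaNormal a) = rankOne ℝ (parabolaTangent a) (parabolaTangent a) :=
  orthProj_eq_rankOne_of_orthonormal finrank_euclideanSpace_fin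
    (orthonormal_parabolaNormal_parabolaTangent a)

lemma norm_orthProj_parabolaNormal_comp_neg_pow_succ (a : ℝ) (n : ℕ) :
    ‖(orthProj (parabolaNormal a) ∘L orthProj (parabolaNormal (-a))) ^ (n + 1)‖ =
      |(1 - 4 * a ^ 2) / (1 + 4 * a ^ 2)| ^ (2 * n + 1) := by
  rw [orthProj_parabolaNormal, orthProj_parabolaNormal,
    norm_rankOne_self_comp_rankOne_self_pow_succ, inner_parabolaTangent_neg, norm_parabolaTangent,
    norm_parabolaTangent, Real.norm_eq_abs, mul_one, mul_one]

lemma abs_one_sub_div_one_add_le_exp_neg {x : ℝ} (hx₀ : 0 ≤ x) (hx₁ : x ≤ 1) :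
    |(1 - x) / (1 + x)| ≤ Real.exp (-x) := by
  have hnum : 0 ≤ 1 - x := sub_nonneg.2 hx₁
  calc |(1 - x) / (1 + x)| = (1 - x) / (1 + x) := abs_of_nonneg (by positivity)
    _ ≤ 1 - x := div_le_self hnum (by linarith)
    _ ≤ Real.exp (-x) := Real.one_sub_le_exp_neg x

theorem stmt17_general :
    ∃ c : ℝ, 0 < c ∧ c < 1 ∧ ∀ j : ℕ, 2 ≤ j →
      ‖(orthProj (parabolaNormal (1 / j)) ∘L orthProj (parabolaNormal (-(1 / j)))) ^ (j ^ 3 / 2)‖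
        ≤ c ^ j := by
  refine ⟨Real.exp (-1), Real.exp_pos _, by simp, fun j hj => ?_⟩
  have hcube : 2 ^ 3 ≤ j ^ 3 := Nat.pow_le_pow_left hj 3
  obtain ⟨n, hn⟩ : ∃ n, j ^ 3 / 2 = n + 1 := ⟨j ^ 3 / 2 - 1, by lia⟩
  have hj' : (2 : ℝ) ≤ j := by exact_mod_cast hj
  have hx : 4 * (1 / (j : ℝ)) ^ 2 ≤ 1 := by
    field_simp
    nlinarith
  have hexp : (j : ℝ) ≤ (2 * n + 1) * (4 * (1 / (j : ℝ)) ^ 2) := by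
    have hn' : (j : ℝ) ^ 3 ≤ 2 * n + 3 := by exact_mod_cast (by lia : j ^ 3 ≤ 2 * n + 3)
    have hcube' : (8 : ℝ) ≤ j ^ 3 := by exact_mod_cast hcube
    field_simp
    linarith
  rw [hn, norm_orthProj_parabolaNormal_comp_neg_pow_succ]
  calc |(1 - 4 * (1 / (j : ℝ)) ^ 2) / (1 + 4 * (1 / (j : ℝ)) ^ 2)| ^ (2 * n + 1)
      ≤ Real.exp (-(4 * (1 / (j : ℝ)) ^ 2)) ^ (2 * n + 1) := by
        gcongr
        exact abs_one_sub_div_one_add_le_exp_neg (by positivity) hx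
    _ ≤ Real.exp (-1) ^ j := by
        rw [← Real.exp_nat_mul, ← Real.exp_nat_mul, Real.exp_le_exp]
        push_cast
        linarith

theorem stmt17 :
    ∃ c₂ : ℝ, 0 < c₂ ∧ c₂ < 1 ∧ ∀ j : ℕ, 2 ≤ j → Even j →
      ‖(((orthProj (parabolaNormal (1 / j))).comp
            (orthProj (parabolaNormal (-(1 / j))))) ^ (j ^ 3 / 2))
          ((WithLp.equiv 2 (Fin 2 → ℝ)).symm ![1, 0])‖ ≤ c₂ ^ j := by
  obtain ⟨c, hc₀, hc₁, hc⟩ := stmt17_general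
  exact ⟨c, hc₀, hc₁, fun j hj _ =>
    ContinuousLinearMap.unit_le_opNorm _ _ (by simp [EuclideanSpace.norm_eq]) |>.trans (hc j hj)⟩
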